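/- Every reflection factorization of a Coxeter element of G5 of length at least five satisfies at least one of the following: (1) at least four of its entries lie in a single conjugacy class; (2) at least three of its entries lie in a single conjugacy class (with at least two further entries in any combination of classes); (3) there are two distinct conjugacy classes each containing at least two of its entries, together with at least one entry from a third class. In particular, no length-five reflection factorization of a Coxeter element of G5 has conjugacy-class multiset consisting of two entries from one class and one entry from each of the other three classes. -/

import Mathlib

noncomputable section

open Matrix Complex

/-- The `i`-th Hurwitz move on length-`k` tuples of group elements. -/
def IsHurwitzMove {G : Type*} [Group G] {k : ℕ} (t t' : Fin k → G) : Prop :=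
  ∃ i : ℕ, ∃ h : i + 1 < k,
    t' ⟨i, Nat.lt_of_succ_lt h⟩ = t ⟨i + 1, h⟩ ∧
    t' ⟨i + 1, h⟩ = (t ⟨i + 1, h⟩)⁻¹ * t ⟨i, Nat.lt_of_succ_lt h⟩ * t ⟨i + 1, h⟩ ∧
    ∀ j : Fin k, (j : ℕ) ≠ i → (j : ℕ) ≠ i + 1 → t' j = t j

/-- Two tuples lie in the same Hurwitz orbit. -/
def SameHurwitzOrbit {G : Type*} [Group G] {k : ℕ} (t t' : Fin k → G) : Prop :=
  Relation.EqvGen IsHurwitzMove t t'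

/-- A group element `r` appears (as an entry) in the Hurwitz orbit of the tuple `t`. -/
def Appears {G : Type*} [Group G] {k : ℕ} (r : G) (t : Fin k → G) : Prop :=
  ∃ s : Fin k → G, SameHurwitzOrbit t s ∧ ∃ j, s j = r

/-- A tuple has two consecutive equal entries. -/
def HasConsecutiveEqualPair {G : Type*} [Group G] {k : ℕ} (t : Fin k → G) : Prop :=
  ∃ i : ℕ, ∃ h : i + 1 < k, t ⟨i, Nat.lt_of_succ_lt h⟩ = t ⟨i + 1, h⟩

/-- Replace the `p`-th entry of a tuple by two consecutive copies of its square. -/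
def doubleAt {G : Type*} [Group G] {m : ℕ} (t : Fin m → G) (p : Fin m) : Fin (m + 1) → G :=
  fun j =>
    if h1 : (j : ℕ) < (p : ℕ) then t ⟨j, h1.trans p.isLt⟩
    else if h2 : (j : ℕ) ≤ (p : ℕ) + 1 then (t p) ^ 2
    else t ⟨(j : ℕ) - 1, by have := j.isLt; omega⟩

/-- `ω = e^(2πi/3)`. -/
def ω : ℂ := Complex.exp (2 * Real.pi * Complex.I / 3)

def AMat : Matrix (Fin 2) (Fin 2) ℂ := !![1, 0; 0, ω]

def BMat : Matrix (Fin 2) (Fin 2) ℂ :=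
  !![(ω - ω ^ 2) / 3, ω ^ 2; (-2 * ω ^ 2) / 3, (-ω - 2 * ω ^ 2) / 3]

/-- The complex reflection group G₄ as the subgroup of GL(2,ℂ) generated by `AMat`, `BMat`. -/
def G4 : Subgroup (GL (Fin 2) ℂ) :=
  Subgroup.closure {g : GL (Fin 2) ℂ |
    (g : Matrix (Fin 2) (Fin 2) ℂ) = AMat ∨ (g : Matrix (Fin 2) (Fin 2) ℂ) = BMat}

/-- The matrix underlying an element of G₄. -/
def mat (t : G4) : Matrix (Fin 2) (Fin 2) ℂ := ((t : GL (Fin 2) ℂ) : Matrix (Fin 2) (Fin 2) ℂ)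

/-- A reflection in G₄: a non-identity element with eigenvalue 1. -/
def IsReflection (t : G4) : Prop := t ≠ 1 ∧ (mat t - 1).det = 0

/-- The conjugacy class R₁ of reflections of determinant ω. -/
def R1 : Set G4 := {t | IsReflection t ∧ (mat t).det = ω}

/-- The conjugacy class R₂ of reflections of determinant ω². -/
def R2 : Set G4 := {t | IsReflection t ∧ (mat t).det = ω ^ 2}

/-- A Coxeter element of G₄: an element with a primitive 6th root of unity as eigenvalue. -/
def IsCoxeter (c : G4) : Prop :=
  ∃ ζ : ℂ, IsPrimitiveRoot ζ 6 ∧ (mat c - ζ • (1 : Matrix (Fin 2) (Fin 2) ℂ)).det = 0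

/-- The relators of G₅: a³, b³, abab(baba)⁻¹. -/
def g5Rels : Set (FreeGroup (Fin 2)) :=
  {FreeGroup.of 0 ^ 3, FreeGroup.of 1 ^ 3,
    FreeGroup.of 0 * FreeGroup.of 1 * FreeGroup.of 0 * FreeGroup.of 1 *
      (FreeGroup.of 1 * FreeGroup.of 0 * FreeGroup.of 1 * FreeGroup.of 0)⁻¹}

/-- The complex reflection group G₅, by its presentation ⟨a,b | a³ = b³ = 1, abab = baba⟩. -/
abbrev G5 := PresentedGroup g5Rels

def ga : G5 := PresentedGroup.of 0
def gb : G5 := PresentedGroup.of 1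

/-- The conjugacy class of `a` in G₅. -/
def S1 : Set G5 := {t | IsConj ga t}
/-- The conjugacy class of `b` in G₅. -/
def S2 : Set G5 := {t | IsConj gb t}
/-- The conjugacy class of `a²` in G₅. -/
def S3 : Set G5 := {t | IsConj (ga ^ 2) t}
/-- The conjugacy class of `b²` in G₅. -/
def S4 : Set G5 := {t | IsConj (gb ^ 2) t}

/-- A reflection in G₅: a conjugate of a, b, a², or b². -/
def IsReflection5 (t : G5) : Prop := t ∈ S1 ∨ t ∈ S2 ∨ t ∈ S3 ∨ t ∈ S4

/-- A Coxeter element of G₅: an element of order 12. -/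
def IsCoxeter5 (c : G5) : Prop := orderOf c = 12

section G5Aux

set_option linter.unusedSimpArgs false

variable {G : Type*} [Group G]

/-- The basic relations. -/
theorem aux_rels (a b : G) (ha : a ^ 3 = 1) (hb : b ^ 3 = 1)
    (h : a * b * a * b = b * a * b * a) :
    ∃ u v w z : G, u = a * b ∧ v = b * a ∧ b = v * (a * a) ∧ z = u * u ∧
      z * a = a * z ∧ z * u = u * z ∧ z * v = v * z ∧ z * w = w * z ∧
      u * a = a * v ∧ v * a = a * w ∧ w * a = a * u ∧
      v * v = z ∧ w * w = z ∧ u * v * w = 1 ∧ v * w * u = 1 ∧ w * u * v = 1 := by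
  have ha' : a * a * a = 1 := by rw [← ha]; simp only [pow_succ, pow_zero, one_mul]
  have hb' : b * b * b = 1 := by rw [← hb]; simp only [pow_succ, pow_zero, one_mul]
  have ca : a * a = a⁻¹ := eq_inv_of_mul_eq_one_left ha'
  have cb : b * b = b⁻¹ := eq_inv_of_mul_eq_one_left hb'
  have za : Commute (a * b * (a * b)) a := by
    show a * b * (a * b) * a = a * (a * b * (a * b))
    calc _ = a * (b * a * b * a) := by group
      _ = _ := by rw [← h]; group
  have zb : Commute (a * b * (a * b)) b := by
    show a * b * (a * b) * b = b * (a * b * (a * b))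
    calc _ = (a * b * a * b) * b := by group
      _ = _ := by rw [h]; group
  have zi := za.inv_right
  have hw : a⁻¹ * b * a⁻¹ = a⁻¹ * (b * a) * a := by
    calc _ = a⁻¹ * b * (a * a) := by rw [ca]
      _ = _ := by group
  have hvv : b * a * (b * a) = a * b * (a * b) := by
    calc _ = b * a * b * a := by group
      _ = _ := by rw [← h]; group
  have huvw : a * b * (b * a) * (a⁻¹ * b * a⁻¹) = 1 := by
    calc _ = a * (b * b * b) * a⁻¹ := by group
      _ = 1 := by rw [hb']; group
  have hww : (a⁻¹ * b * a⁻¹) * (a⁻¹ * b * a⁻¹) = a * b * (a * b) := by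
    rw [hw]
    calc _ = a⁻¹ * (b * a * (b * a)) * a := by group
      _ = a⁻¹ * ((a * b * (a * b)) * a) := by rw [hvv]; group
      _ = _ := by rw [za.eq]; group
  refine ⟨a * b, b * a, a⁻¹ * b * a⁻¹, a * b * (a * b), rfl, rfl, ?_, rfl, za.eq,
    (za.mul_right zb).eq, (zb.mul_right za).eq, ((zi.mul_right zb).mul_right zi).eq, ?_, ?_, ?_,
    hvv, hww, huvw, ?_, ?_⟩
  · rw [ca]; group
  · group
  · rw [hw]; group
  · calc _ = a⁻¹ * b := by group
      _ = _ := by rw [← ca]; group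
  · rw [mul_assoc] at huvw
    exact mul_eq_one_iff_eq_inv.2 (eq_inv_of_mul_eq_one_right huvw)
  · rw [mul_assoc]
    rw [mul_eq_one_iff_eq_inv] at huvw
    rw [huvw]; group

theorem aux_rels2 {u v w z : G} (cu : z * u = u * z) (cv : z * v = v * z) (cw : z * w = w * z)
    (hu : u * u = z) (hv : v * v = z) (hw : w * w = z) (h1 : u * v * w = 1) (h2 : v * w * u = 1)
    (h3 : w * u * v = 1) :
    z ^ 6 = 1 ∧ u * v = w * z ^ 5 ∧ v * w = u * z ^ 5 ∧ w * u = v * z ^ 5 ∧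
    v * u = w * z ^ 2 ∧ w * v = u * z ^ 2 ∧ u * w = v * z ^ 2 := by
  have key : ∀ u v w : G, z * u = u * z → z * v = v * z → z * w = w * z → u * u = z → v * v = z →
      w * w = z → u * v * w = 1 → v * u = w * z ^ 2 := by
    intro u v w cu cv cw hu hv hw h
    have e : v * u * (u * v * w) = w * z ^ 2 := by
      calc _ = v * (u * u) * v * w := by group
        _ = v * (z * v) * w := by rw [hu]; group
        _ = (v * v) * (z * w) := by rw [cv]; group
        _ = w * z * z := by rw [hv, cw, ← mul_assoc, cw]
        _ = _ := by simp only [pow_succ, pow_zero, one_mul, mul_assoc]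
    rw [h, mul_one] at e; exact e
  have k1 := key u v w cu cv cw hu hv hw h1
  have k2 := key v w u cv cw cu hv hw hu h2
  have k3 := key w u v cw cu cv hw hu hv h3
  have z6 : z ^ 6 = 1 := by
    have cu' : Commute z u := cu
    have cv' : Commute z v := cv
    have cw' : Commute z w := cw
    have e1 : (v * u) * (v * u) = z ^ 5 := by
      rw [k1]
      calc _ = w * (z ^ 2 * w) * z ^ 2 := by group
        _ = (w * w) * z ^ 4 := by rw [(cw'.pow_left 2).eq]; group
        _ = _ := by rw [hw]; group
    have e2 : (u * v) * (u * v) = z⁻¹ := by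
      rw [eq_inv_of_mul_eq_one_left h1, ← hw]; group
    have e3 : u * ((v * u) * (v * u)) = ((u * v) * (u * v)) * u := by group
    rw [e1, e2, cu'.inv_left.eq] at e3
    have e4 := mul_left_cancel e3
    calc z ^ 6 = z ^ 5 * z := by group
      _ = 1 := by rw [e4]; group
  have key2 : ∀ u v w : G, w * w = z → u * v * w = 1 → u * v = w * z ^ 5 := by
    intro u v w hw h
    have e : w * w * z ^ 5 = 1 := by rw [hw, ← z6]; group
    rw [eq_inv_of_mul_eq_one_left h]
    rw [mul_assoc] at e
    exact (eq_inv_of_mul_eq_one_right e).symm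
  exact ⟨z6, key2 _ _ _ hw h1, key2 _ _ _ hu h2, key2 _ _ _ hv h3, k1, k2, k3⟩


theorem aux_ext {x y t : G} (h : x * y = t) (r : G) : x * (y * r) = t * r := by
  rw [← mul_assoc, h]

/-- Orders of elements and their images in an abelian quotient. -/
theorem aux_order {M : Type*} [CommGroup M] (φ : G →* M) (a b : G) (ha : a ^ 3 = 1)
    (hb : b ^ 3 = 1)
    (h : a * b * a * b = b * a * b * a) (gen : Subgroup.closure {a, b} = ⊤) (g : G) :
    g ^ 6 = 1 ∨ g ^ 4 = 1 ∨ ∃ i : ℕ, (2 * i + 1) % 3 ≠ 0 ∧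
      φ g = (φ a * φ b) ^ (2 * i + 1) := by
  obtain ⟨u, v, w, z, hu, hv0, hbv, hz, ca, cu, cv, cw, ua, va, wa, hv, hw, h1, h2, h3⟩ :=
    aux_rels a b ha hb h
  obtain ⟨z6, uv, vw, wu, vu, wv, uw⟩ := aux_rels2 cu cv cw hz.symm hv hw h1 h2 h3
  have norm : ∀ g : G, ∃ j q, ∃ i : ℕ, (j = 1 ∨ j = a ∨ j = a * a) ∧
      (q = 1 ∨ q = u ∨ q = v ∨ q = w) ∧ g = j * q * z ^ i := by
    have mulA : ∀ g : G, (∃ j q, ∃ i : ℕ, (j = 1 ∨ j = a ∨ j = a * a) ∧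
      (q = 1 ∨ q = u ∨ q = v ∨ q = w) ∧ g = j * q * z ^ i) → 
      (∃ j q, ∃ i : ℕ, (j = 1 ∨ j = a ∨ j = a * a) ∧
      (q = 1 ∨ q = u ∨ q = v ∨ q = w) ∧ g * a = j * q * z ^ i) := by
      rintro g ⟨j, q, i, hj, hq, rfl⟩
      have c : z ^ i * a = a * z ^ i := (Commute.pow_left (show Commute z a from ca) i).eq
      have hq' : ∃ q', (q' = 1 ∨ q' = u ∨ q' = v ∨ q' = w) ∧ q * a = a * q' := by
        rcases hq with rfl | rfl | rfl | rfl
        · exact ⟨1, by simp, by simp⟩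
        · exact ⟨v, by simp, ua⟩
        · exact ⟨w, by simp, va⟩
        · exact ⟨u, by simp, wa⟩
      obtain ⟨q', hq', e⟩ := hq'
      have hj' : ∃ j', (j' = 1 ∨ j' = a ∨ j' = a * a) ∧ j * a = j' := by
        rcases hj with rfl | rfl | rfl
        · exact ⟨a, by simp, by simp⟩
        · exact ⟨_, Or.inr (Or.inr rfl), rfl⟩
        · exact ⟨1, by simp, by rw [← ha]; simp only [pow_succ, pow_zero, one_mul]⟩
      obtain ⟨j', hj', e'⟩ := hj'
      refine ⟨j', q', i, hj', hq', ?_⟩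
      rw [mul_assoc, c, ← e', mul_assoc j q, ← mul_assoc q a, e]
      simp only [mul_assoc]
    have mulV : ∀ g : G, (∃ j q, ∃ i : ℕ, (j = 1 ∨ j = a ∨ j = a * a) ∧
      (q = 1 ∨ q = u ∨ q = v ∨ q = w) ∧ g = j * q * z ^ i) → 
      (∃ j q, ∃ i : ℕ, (j = 1 ∨ j = a ∨ j = a * a) ∧
      (q = 1 ∨ q = u ∨ q = v ∨ q = w) ∧ g * v = j * q * z ^ i) := by
      rintro g ⟨j, q, i, hj, hq, rfl⟩
      have c : z ^ i * v = v * z ^ i := (Commute.pow_left (show Commute z v from cv) i).eq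
      have hq' : ∃ q', ∃ m : ℕ, (q' = 1 ∨ q' = u ∨ q' = v ∨ q' = w) ∧ q * v = q' * z ^ m := by
        rcases hq with rfl | rfl | rfl | rfl
        · exact ⟨v, 0, by simp, by simp⟩
        · exact ⟨w, 5, by simp, uv⟩
        · exact ⟨1, 1, by simp, by simp [hv]⟩
        · exact ⟨u, 2, by simp, wv⟩
      obtain ⟨q', m, hq', e⟩ := hq'
      refine ⟨j, q', m + i, hj, hq', ?_⟩
      rw [mul_assoc, c, mul_assoc j q, ← mul_assoc q v, e, pow_add]
      simp only [mul_assoc]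
    have mulB : ∀ g : G, (∃ j q, ∃ i : ℕ, (j = 1 ∨ j = a ∨ j = a * a) ∧
      (q = 1 ∨ q = u ∨ q = v ∨ q = w) ∧ g = j * q * z ^ i) → 
      (∃ j q, ∃ i : ℕ, (j = 1 ∨ j = a ∨ j = a * a) ∧
      (q = 1 ∨ q = u ∨ q = v ∨ q = w) ∧ g * b = j * q * z ^ i) := by
      intro g hg
      have := mulA _ (mulA _ (mulV g hg))
      rw [hbv, ← mul_assoc, ← mul_assoc]; exact this
    have ia : a⁻¹ = a * a := by
      rw [inv_eq_iff_mul_eq_one, ← ha]; simp only [pow_succ, pow_zero, one_mul, mul_assoc]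
    have ib : b⁻¹ = b * b := by
      rw [inv_eq_iff_mul_eq_one, ← hb]; simp only [pow_succ, pow_zero, one_mul, mul_assoc]
    intro g
    have hg : g ∈ Subgroup.closure {a, b} := by rw [gen]; trivial
    induction hg using Subgroup.closure_induction_right with
    | one => exact ⟨1, 1, 0, by simp, by simp, by simp⟩
    | mul_right x _ y hy ih =>
      rcases hy with rfl | rfl
      · exact mulA _ ih
      · exact mulB _ ih
    | mul_inv_cancel x _ y hy ih =>
      rcases hy with rfl | rfl
      · rw [ia, ← mul_assoc]; exact mulA _ (mulA _ ih)
      · rw [ib, ← mul_assoc]; exact mulB _ (mulB _ ih)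
  obtain ⟨j, q, i, hj, hq, rfl⟩ := norm g
  have hcz : ∀ x, (x = 1 ∨ x = a ∨ x = a * a ∨ x = u ∨ x = v ∨ x = w) → Commute z x := by
    have ca' : Commute z a := ca
    rintro x (rfl | rfl | rfl | rfl | rfl | rfl)
    · exact Commute.one_right z
    · exact ca
    · exact ca'.mul_right ca'
    · exact cu
    · exact cv
    · exact cw
  have hcg : Commute (j * q) (z ^ i) := by
    refine Commute.pow_right (Commute.mul_right ?_ ?_).symm i
    · apply hcz; tauto
    · apply hcz; tauto
  have zi6 : (z ^ i) ^ 6 = 1 := by rw [← pow_mul, mul_comm, pow_mul, z6, one_pow]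
  have a3 : a * (a * a) = 1 := by
    rw [← ha]; simp only [pow_succ, pow_zero, one_mul, mul_assoc]
  have z6' : z * (z * (z * (z * (z * z)))) = 1 := by
    rw [← z6]; simp only [pow_succ, pow_zero, one_mul, mul_assoc]
  have z6'' : ∀ r, z * (z * (z * (z * (z * (z * r))))) = r := by
    intro r
    nth_rw 2 [← one_mul r]; rw [← z6']; simp only [mul_assoc]
  have a3' : ∀ r, a * (a * (a * r)) = r := by
    intro r
    nth_rw 2 [← one_mul r]; rw [← a3]; simp only [mul_assoc]
  by_cases hj1 : j = 1
  · subst hj1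
    rw [one_mul] at *
    by_cases hq1 : q = 1
    · subst hq1; left; rw [one_mul, zi6]
    · have hq : q = u ∨ q = v ∨ q = w := by tauto
      have q2 : q * q = z := by rcases hq with rfl | rfl | rfl <;> simp [hv, hw, hz]
      have g2 : (q * z ^ i) ^ 2 = z ^ (2 * i + 1) := by
        rw [hcg.mul_pow, pow_two q, q2, ← pow_mul, mul_comm i 2, pow_succ']
      right
      by_cases hm : (2 * i + 1) % 3 = 0
      · left
        rw [show 4 = 2 * 2 from rfl, pow_mul, g2, ← pow_mul]
        obtain ⟨m, hm⟩ : ∃ m, 2 * i + 1 = 3 * m := ⟨(2 * i + 1) / 3, by omega⟩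
        rw [hm, show 3 * m * 2 = 6 * m by ring, pow_mul, z6, one_pow]
      · right
        refine ⟨i, hm, ?_⟩
        have fu : φ u = φ a * φ b := by rw [hu, map_mul]
        have fv : φ v = φ a * φ b := by rw [hv0, map_mul, mul_comm]
        have fw : φ w = φ a * φ b := by
          have := congrArg φ wa
          rw [map_mul, map_mul, mul_comm] at this
          rw [mul_left_cancel this, fu]
        have fq : φ q = φ a * φ b := by rcases hq with rfl | rfl | rfl <;> assumption
        rw [map_mul, map_pow, fq, hz, map_mul, fu, pow_succ', pow_mul, pow_two]
  · left
    rw [hcg.mul_pow, zi6, mul_one]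
    have hj : j = a ∨ j = a * a := by tauto
    have hu2 := hz.symm
    rcases hj with rfl | rfl <;> rcases hq with rfl | rfl | rfl | rfl <;>
    simp only [pow_succ, pow_zero, one_mul, mul_one, mul_assoc, aux_ext ua, aux_ext va, aux_ext wa,
      ua, va, wa, ca, cu, cv, cw, aux_ext ca, aux_ext cu, aux_ext cv, aux_ext cw,
      hu2, hv, hw, aux_ext hu2, aux_ext hv, aux_ext hw, uv, vw, wu, vu, wv, uw,
      aux_ext uv, aux_ext vw, aux_ext wu, aux_ext vu, aux_ext wv, aux_ext uw, a3, a3', z6', z6'']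

end G5Aux

/-- The abelianization map. -/
def g5phi : G5 →* Multiplicative (ZMod 3 × ZMod 3) :=
  PresentedGroup.toGroup (rels := g5Rels)
    (f := ![Multiplicative.ofAdd (1, 0), Multiplicative.ofAdd (0, 1)]) (by
      rintro r (rfl | rfl | rfl)
      · simp only [map_pow, FreeGroup.lift_apply_of]; decide
      · simp only [map_pow, FreeGroup.lift_apply_of]; decide
      · simp only [map_mul, map_inv, FreeGroup.lift_apply_of]; decide)

theorem g5phi_a : g5phi ga = Multiplicative.ofAdd (1, 0) := by
  simp [g5phi, ga]

theorem g5phi_b : g5phi gb = Multiplicative.ofAdd (0, 1) := by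
  simp [g5phi, gb]

theorem g5_a3 : ga ^ 3 = 1 := by
  have : PresentedGroup.mk g5Rels (FreeGroup.of 0 ^ 3) = 1 :=
    PresentedGroup.one_of_mem (by simp [g5Rels])
  rw [map_pow] at this; exact this

theorem g5_b3 : gb ^ 3 = 1 := by
  have : PresentedGroup.mk g5Rels (FreeGroup.of 1 ^ 3) = 1 :=
    PresentedGroup.one_of_mem (by simp [g5Rels])
  rw [map_pow] at this; exact this

theorem g5_br : ga * gb * ga * gb = gb * ga * gb * ga := by
  have : PresentedGroup.mk g5Rels (FreeGroup.of 0 * FreeGroup.of 1 * FreeGroup.of 0 *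
      FreeGroup.of 1 *
      (FreeGroup.of 1 * FreeGroup.of 0 * FreeGroup.of 1 * FreeGroup.of 0)⁻¹) = 1 :=
    PresentedGroup.one_of_mem (by simp [g5Rels])
  rw [map_mul, map_inv, mul_inv_eq_one] at this
  simp only [map_mul] at this; exact this

theorem g5_gen : Subgroup.closure {ga, gb} = (⊤ : Subgroup G5) := by
  rw [← PresentedGroup.closure_range_of g5Rels]
  congr 1
  ext x
  simp [Fin.exists_fin_two, ga, gb, eq_comm]

theorem g5_cox (c : G5) (hc : IsCoxeter5 c) :
    g5phi c = Multiplicative.ofAdd (1, 1) ∨ g5phi c = Multiplicative.ofAdd (2, 2) := by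
  unfold IsCoxeter5 at hc
  rcases aux_order g5phi ga gb g5_a3 g5_b3 g5_br g5_gen c with h | h | ⟨i, hi, h⟩
  · have := orderOf_dvd_of_pow_eq_one h
    rw [hc] at this; omega
  · have := orderOf_dvd_of_pow_eq_one h
    rw [hc] at this; omega
  · rw [h, g5phi_a, g5phi_b]
    have h3 : (Multiplicative.ofAdd ((1, 0) : ZMod 3 × ZMod 3) * Multiplicative.ofAdd (0, 1)) ^ 3
      = 1 := by decide
    rw [← Nat.div_add_mod (2 * i + 1) 3, pow_add, pow_mul, h3, one_pow, one_mul]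
    have : (2 * i + 1) % 3 = 1 ∨ (2 * i + 1) % 3 = 2 := by omega
    rcases this with h | h <;> rw [h] <;> decide

theorem g5_phi_conj {x y : G5} (h : IsConj x y) : g5phi y = g5phi x := by
  have := g5phi.map_isConj h
  exact (isConj_iff_eq.1 this).symm

/-- Class values in the abelianization. -/
def g5cv : Fin 4 → ZMod 3 × ZMod 3 := ![(1, 0), (0, 1), (2, 0), (0, 2)]

def SS : Fin 4 → Set G5 := ![S1, S2, S3, S4]

theorem SS_phi (j : Fin 4) (x : G5) (h : x ∈ SS j) : g5phi x = Multiplicative.ofAdd (g5cv j) := by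
  fin_cases j <;> rw [g5_phi_conj h] <;> simp only [map_pow, g5phi_a, g5phi_b] <;> decide

theorem g5_counts (k : ℕ) (t : Fin k → G5) (ht : ∀ i, IsReflection5 (t i)) :
    ∃ n : Fin 4 → ℕ, (∀ j, {i : Fin k | t i ∈ SS j}.ncard = n j) ∧ ∑ j, n j = k ∧
      g5phi (List.ofFn t).prod = Multiplicative.ofAdd (∑ j, n j • g5cv j) := by
  have ht' : ∀ i, ∃ j, t i ∈ SS j := by
    intro i
    rcases ht i with h | h | h | h
    · exact ⟨0, h⟩
    · exact ⟨1, h⟩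
    · exact ⟨2, h⟩
    · exact ⟨3, h⟩
  choose f hf using ht'
  have inj : Function.Injective g5cv := by decide
  have iff : ∀ i j, t i ∈ SS j ↔ f i = j := by
    intro i j
    constructor
    · intro h
      apply inj
      exact Multiplicative.ofAdd.injective ((SS_phi _ _ (hf i)).symm.trans (SS_phi _ _ h))
    · rintro rfl; exact hf i
  refine ⟨fun j => (Finset.univ.filter (fun i => f i = j)).card, ?_, ?_, ?_⟩
  · intro j
    simp only [iff]
    rw [← Set.ncard_coe_finset]; simp
  · rw [← Finset.card_eq_sum_card_fiberwise (fun _ _ => Finset.mem_coe.2 (Finset.mem_univ _))]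
    simp
  · rw [map_list_prod, List.map_ofFn, List.prod_ofFn]
    simp only [Function.comp_apply, SS_phi _ _ (hf _)]
    rw [← ofAdd_sum, ← Finset.sum_fiberwise Finset.univ f]
    congr 1
    refine Finset.sum_congr rfl fun j _ => ?_
    rw [Finset.sum_congr rfl (g := fun _ => g5cv j), Finset.sum_const]
    intro i hi
    rw [(Finset.mem_filter.1 hi).2]

theorem g5_class_distribution (k : ℕ) (hk : 5 ≤ k) (c : G5) (hc : IsCoxeter5 c)
    (t : Fin k → G5) (ht : ∀ i, IsReflection5 (t i)) (hp : (List.ofFn t).prod = c) :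
    ((∃ R ∈ ({S1, S2, S3, S4} : Set (Set G5)), 4 ≤ {i : Fin k | t i ∈ R}.ncard) ∨
     (∃ R ∈ ({S1, S2, S3, S4} : Set (Set G5)), 3 ≤ {i : Fin k | t i ∈ R}.ncard) ∨
     (∃ R ∈ ({S1, S2, S3, S4} : Set (Set G5)), ∃ R' ∈ ({S1, S2, S3, S4} : Set (Set G5)),
       ∃ R'' ∈ ({S1, S2, S3, S4} : Set (Set G5)), R ≠ R' ∧ R ≠ R'' ∧ R' ≠ R'' ∧
       2 ≤ {i : Fin k | t i ∈ R}.ncard ∧ 2 ≤ {i : Fin k | t i ∈ R'}.ncard ∧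
       1 ≤ {i : Fin k | t i ∈ R''}.ncard)) ∧
    (k = 5 → ¬ ∃ R ∈ ({S1, S2, S3, S4} : Set (Set G5)),
      {i : Fin k | t i ∈ R}.ncard = 2 ∧
      ∀ R' ∈ ({S1, S2, S3, S4} : Set (Set G5)), R' ≠ R →
        {i : Fin k | t i ∈ R'}.ncard = 1) := by
  obtain ⟨n, hn, hsum, hphi⟩ := g5_counts k t ht
  have hne : ∀ i j, i ≠ j → SS i ≠ SS j := by
    have inj : Function.Injective g5cv := by decide
    have hmem : ∀ i, ∃ x, x ∈ SS i := by
      intro i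
      fin_cases i
      · exact ⟨ga, IsConj.refl _⟩
      · exact ⟨gb, IsConj.refl _⟩
      · exact ⟨ga ^ 2, IsConj.refl _⟩
      · exact ⟨gb ^ 2, IsConj.refl _⟩
    intro i j hij h
    obtain ⟨x, hx⟩ := hmem i
    have hx' := hx
    rw [h] at hx'
    exact hij (inj (Multiplicative.ofAdd.injective ((SS_phi _ _ hx).symm.trans (SS_phi _ _ hx'))))
  have hset : ({S1, S2, S3, S4} : Set (Set G5)) = Set.range SS := by
    ext x; simp [SS]; tauto
  have hmod : ((n 0 + 2 * n 2) % 3 = 1 ∧ (n 1 + 2 * n 3) % 3 = 1) ∨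
      ((n 0 + 2 * n 2) % 3 = 2 ∧ (n 1 + 2 * n 3) % 3 = 2) := by
    have h := g5_cox c hc
    rw [← hp, hphi] at h
    have e : ∑ j, n j • g5cv j = (((n 0 + 2 * n 2 : ℕ) : ZMod 3), ((n 1 + 2 * n 3 : ℕ) : ZMod 3)) := by
      rw [Fin.sum_univ_four]
      apply Prod.ext <;> simp [g5cv, mul_comm]
    rw [e] at h
    have key : ∀ m r : ℕ, (m : ZMod 3) = (r : ZMod 3) → m % 3 = r % 3 :=
      fun m r h => (ZMod.natCast_eq_natCast_iff m r 3).1 h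
    rcases h with h | h
    · left
      have h' := Prod.mk.inj (Multiplicative.ofAdd.injective h)
      exact ⟨key _ 1 (by rw [h'.1]; rfl), key _ 1 (by rw [h'.2]; rfl)⟩
    · right
      have h' := Prod.mk.inj (Multiplicative.ofAdd.injective h)
      exact ⟨key _ 2 (by rw [h'.1]; rfl), key _ 2 (by rw [h'.2]; rfl)⟩
  rw [Fin.sum_univ_four] at hsum
  rw [hset]
  simp only [Set.exists_range_iff, Set.forall_mem_range, hn]
  constructor
  · right
    by_cases h3 : ∃ j, 3 ≤ n j
    · left; exact h3
    · right
      push Not at h3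
      have l0 := h3 0
      have l1 := h3 1
      have l2 := h3 2
      have l3 := h3 3
      have fin : ∀ i j l : Fin 4, i ≠ j → i ≠ l → j ≠ l → 2 ≤ n i → 2 ≤ n j → 1 ≤ n l →
          ∃ i j l : Fin 4, SS i ≠ SS j ∧ SS i ≠ SS l ∧ SS j ≠ SS l ∧ 2 ≤ n i ∧ 2 ≤ n j ∧ 1 ≤ n l :=
        fun i j l h1 h2 h3 h4 h5 h6 => ⟨i, j, l, hne _ _ h1, hne _ _ h2, hne _ _ h3, h4, h5, h6⟩
      have : (2 ≤ n 0 ∧ 2 ≤ n 1 ∧ (1 ≤ n 2 ∨ 1 ≤ n 3)) ∨ (2 ≤ n 0 ∧ 2 ≤ n 3 ∧ (1 ≤ n 1 ∨ 1 ≤ n 2)) ∨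
        (2 ≤ n 2 ∧ 2 ≤ n 1 ∧ (1 ≤ n 0 ∨ 1 ≤ n 3)) ∨ (2 ≤ n 2 ∧ 2 ≤ n 3 ∧ (1 ≤ n 0 ∨ 1 ≤ n 1)) := by
        clear fin h3 hphi hn
        generalize n 0 = p, n 1 = q, n 2 = r, n 3 = s at *
        subst hsum
        clear hne hset hc hp ht
        interval_cases p <;> interval_cases q <;> omega
      rcases this with ⟨p, q, r | r⟩ | ⟨p, q, r | r⟩ | ⟨p, q, r | r⟩ | ⟨p, q, r | r⟩ <;>
        exact fin _ _ _ (by decide) (by decide) (by decide) p q r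
  · rintro hk5 ⟨i, h2, h1⟩
    have h1' : ∀ j, j ≠ i → n j = 1 := fun j hj => h1 j (hne _ _ hj)
    have g0 := h1' 0
    have g1 := h1' 1
    have g2 := h1' 2
    have g3 := h1' 3
    fin_cases i <;> simp at g0 g1 g2 g3 h2 <;> omega
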